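/- Let (X,d,m) be a metric measure space, φ : X → [0,∞) Borel, and R > 0. Then the φ-weighted Hajłasz–Sobolev space at scale R, H_{φ,R}(X) := {f ∈ L²(m) : A_{φ,R}(f) ≠ ∅}, is a linear subspace of L²(m); the quantity ‖f‖_{H_{φ,R}} := (‖f‖²_{L²(m)} + inf_{G ∈ A_{φ,R}(f)} ‖G‖²_{L²(m)})^{1/2} is a norm on H_{φ,R}(X); and (H_{φ,R}(X), ‖·‖_{H_{φ,R}}) is a Banach space, i.e. every Cauchy sequence with respect to this norm converges in this norm to an element of H_{φ,R}(X). -/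

import Mathlib

/-!
The pairs `(f, G)` with `G ∈ A_{φ,R}(f)` form a closed convex cone in `L² × L²`:
`AdmissibleSet.add` gives sums, `AdmissibleSet.smul` sends `(f, G)` to `(c f, |c| G)`, and
`AdmissibleSet.of_tendsto` passes to limits, since `L²` convergence yields a.e. convergence along a
subsequence and countably many null sets can be discarded together.
By definition the `H_{φ,R}`-norm of `f` is the infimum of the Euclidean length of `(‖f‖, ‖G‖)` over
`G ∈ A_{φ,R}(f)`, so the norm axioms follow from the cone property and Minkowski's inequality in
the plane.

For completeness, a Cauchy sequence converges in `L²` to some `f` because the `H_{φ,R}`-norm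
dominates the `L²` norm. Along a subsequence `v` whose consecutive differences have norm less than
`2⁻ᵏ`, choose `G k ∈ A_{φ,R}(v (k+1) - v k)` with `‖G k‖ < 2⁻ᵏ`. The telescoping differences
`v (K+j) - v K` admit the partial sums of `G` from `K` on, so closedness shows that `f - v K` admits
the tail `∑_{k ≥ K} G k`, of norm at most `2 · 2⁻ᴷ`. Hence `v K → f` in `H_{φ,R}`, and so does the
whole Cauchy sequence.
-/

open MeasureTheory Filter
open scoped ENNReal

variable {X : Type*} [MetricSpace X] [MeasurableSpace X] [BorelSpace X]

/-- `G` is admissible for `f` (at scale `R`, with weight `φ`): there is an `m`-null set `N`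
such that `|f x - f y| ≤ e^{φ x + φ y} (G x + G y) d(x,y)` for all `x, y ∉ N` with
`d(x,y) ≤ R`. -/
def AdmissiblePtwise {X : Type*} [MetricSpace X] [MeasurableSpace X]
    (m : Measure X) (φ : X → ℝ) (R : ℝ) (f G : X → ℝ) : Prop :=
  ∃ N : Set X, m N = 0 ∧ ∀ x ∉ N, ∀ y ∉ N, dist x y ≤ R →
    |f x - f y| ≤ Real.exp (φ x + φ y) * (G x + G y) * dist x y

/-- The set `A_{φ,R}(f)` of admissible functions for `f ∈ L²(m)`, as a subset of `L²(m)`. -/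
def AdmissibleSet (m : Measure X) (φ : X → ℝ) (R : ℝ) (f : Lp ℝ 2 m) :
    Set (Lp ℝ 2 m) :=
  {G | (∀ᵐ x ∂m, 0 ≤ G x) ∧ AdmissiblePtwise m φ R (⇑f) (⇑G)}

/-- The weighted Hajłasz–Sobolev space `H_{φ,R}(X) = {f ∈ L²(m) : A_{φ,R}(f) ≠ ∅}`. -/
def hajSet (m : Measure X) (φ : X → ℝ) (R : ℝ) : Set (Lp ℝ 2 m) :=
  {f | (AdmissibleSet m φ R f).Nonempty}

/-- The `H_{φ,R}`-norm `(‖f‖_{L²}² + inf_{G ∈ A_{φ,R}(f)} ‖G‖_{L²}²)^{1/2}`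
(meaningful on `hajSet`). -/
noncomputable def hajNorm (m : Measure X) (φ : X → ℝ) (R : ℝ) (f : Lp ℝ 2 m) : ℝ :=
  Real.sqrt (‖f‖ ^ 2 + sInf ((fun G : Lp ℝ 2 m => ‖G‖ ^ 2) '' AdmissibleSet m φ R f))

section Helpers

variable {m : Measure X} {φ : X → ℝ} {R : ℝ}

/-- Almost-everywhere form of admissibility: the exceptional null set is the complement of a set in
the filter `ae m`. -/
lemma mem_admissibleSet_iff {f G : Lp ℝ 2 m} :
    G ∈ AdmissibleSet m φ R f ↔ (∀ᵐ x ∂m, 0 ≤ G x) ∧ ∃ S ∈ ae m, ∀ x ∈ S, ∀ y ∈ S,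
      dist x y ≤ R → |f x - f y| ≤ Real.exp (φ x + φ y) * (G x + G y) * dist x y := by
  refine and_congr_right fun _ => ⟨?_, ?_⟩
  · rintro ⟨N, hN, h⟩
    exact ⟨Nᶜ, compl_mem_ae_iff.2 hN, h⟩
  · rintro ⟨S, hS, h⟩
    exact ⟨Sᶜ, mem_ae_iff.1 hS, fun x hx y hy => h x (not_not.1 hx) y (not_not.1 hy)⟩

lemma AdmissibleSet.add {f g F G : Lp ℝ 2 m} (hF : F ∈ AdmissibleSet m φ R f)
    (hG : G ∈ AdmissibleSet m φ R g) : F + G ∈ AdmissibleSet m φ R (f + g) := by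
  rw [mem_admissibleSet_iff] at *
  obtain ⟨hF0, S, hS, hF⟩ := hF
  obtain ⟨hG0, T, hT, hG⟩ := hG
  have h1 := Lp.coeFn_add f g
  have h2 := Lp.coeFn_add F G
  refine ⟨?_, _, inter_mem (inter_mem hS hT) (inter_mem h1 h2), ?_⟩
  · filter_upwards [hF0, hG0, h2] with x a b c
    rw [c]; exact add_nonneg a b
  · rintro x ⟨⟨xS, xT⟩, x1, x2⟩ y ⟨⟨yS, yT⟩, y1, y2⟩ hd
    simp only [Set.mem_ofPred_eq, Pi.add_apply] at x1 x2 y1 y2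
    rw [x1, x2, y1, y2]
    calc |f x + g x - (f y + g y)| = |(f x - f y) + (g x - g y)| := by ring_nf
      _ ≤ |f x - f y| + |g x - g y| := abs_add_le _ _
      _ ≤ _ := add_le_add (hF x xS y yS hd) (hG x xT y yT hd)
      _ = _ := by ring

lemma AdmissibleSet.smul {f F : Lp ℝ 2 m} (c : ℝ) (hF : F ∈ AdmissibleSet m φ R f) :
    |c| • F ∈ AdmissibleSet m φ R (c • f) := by
  rw [mem_admissibleSet_iff] at *
  obtain ⟨hF0, S, hS, hF⟩ := hF
  have h1 := Lp.coeFn_smul c f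
  have h2 := Lp.coeFn_smul |c| F
  refine ⟨?_, _, inter_mem hS (inter_mem h1 h2), ?_⟩
  · filter_upwards [hF0, h2] with x a b
    rw [b]; exact mul_nonneg (abs_nonneg c) a
  · rintro x ⟨xS, x1, x2⟩ y ⟨yS, y1, y2⟩ hd
    simp only [Set.mem_ofPred_eq, Pi.smul_apply, smul_eq_mul] at x1 x2 y1 y2
    rw [x1, x2, y1, y2, ← mul_sub, abs_mul]
    calc |c| * |f x - f y| ≤ |c| * (Real.exp (φ x + φ y) * (F x + F y) * dist x y) :=
          mul_le_mul_of_nonneg_left (hF x xS y yS hd) (abs_nonneg c)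
      _ = _ := by ring

lemma AdmissibleSet.zero : (0 : Lp ℝ 2 m) ∈ AdmissibleSet m φ R 0 := by
  rw [mem_admissibleSet_iff]
  have h := Lp.coeFn_zero ℝ 2 m
  refine ⟨by filter_upwards [h] with x hx using hx.ge, _, h, fun x hx y hy _ => ?_⟩
  simp only [Set.mem_ofPred_eq, Pi.zero_apply] at hx hy
  rw [hx, hy]
  simp

lemma exists_subseq_tendsto_ae {f : ℕ → Lp ℝ 2 m} {g : Lp ℝ 2 m}
    (h : Tendsto f atTop (nhds g)) : ∃ ns : ℕ → ℕ, StrictMono ns ∧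
      ∀ᵐ x ∂m, Tendsto (fun i => f (ns i) x) atTop (nhds (g x)) :=
  (tendstoInMeasure_of_tendsto_Lp h).exists_seq_tendsto_ae

/-- The graph `{(f, G) | G ∈ A_{φ,R}(f)}` is sequentially closed in `L² × L²`. -/
lemma AdmissibleSet.of_tendsto {f G : ℕ → Lp ℝ 2 m} {f' G' : Lp ℝ 2 m}
    (hf : Tendsto f atTop (nhds f')) (hG : Tendsto G atTop (nhds G'))
    (h : ∀ n, G n ∈ AdmissibleSet m φ R (f n)) : G' ∈ AdmissibleSet m φ R f' := by
  obtain ⟨a, ha, hfa⟩ := exists_subseq_tendsto_ae hf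
  obtain ⟨b, hb, hGb⟩ := exists_subseq_tendsto_ae (hG.comp ha.tendsto_atTop)
  have hfb : ∀ᵐ x ∂m, Tendsto (fun i => f (a (b i)) x) atTop (nhds (f' x)) := by
    filter_upwards [hfa] with x hx using hx.comp hb.tendsto_atTop
  simp only [mem_admissibleSet_iff] at *
  choose h0 S hS h using h
  refine ⟨?_, _, inter_mem (countable_iInter_mem.2 hS) (inter_mem hfb hGb), ?_⟩
  · filter_upwards [ae_all_iff.2 h0, hGb] with x hx hl
    exact ge_of_tendsto' hl fun i => hx _
  · rintro x ⟨xS, x1, x2⟩ y ⟨yS, y1, y2⟩ hd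
    rw [Set.mem_iInter] at xS yS
    refine le_of_tendsto_of_tendsto' (x1.sub y1).abs
      (((x2.add y2).const_mul _).mul_const _) fun i => ?_
    exact h _ x (xS _) y (yS _) hd

lemma hajNorm_nonneg (f : Lp ℝ 2 m) : 0 ≤ hajNorm m φ R f := Real.sqrt_nonneg _

lemma norm_le_hajNorm (f : Lp ℝ 2 m) : ‖f‖ ≤ hajNorm m φ R f := by
  refine Real.le_sqrt_of_sq_le (le_add_of_nonneg_right (Real.sInf_nonneg ?_))
  rintro _ ⟨G, -, rfl⟩
  positivity

lemma hajNorm_le {f G : Lp ℝ 2 m} (hG : G ∈ AdmissibleSet m φ R f) :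
    hajNorm m φ R f ≤ √(‖f‖ ^ 2 + ‖G‖ ^ 2) := by
  refine Real.sqrt_le_sqrt (add_le_add le_rfl (csInf_le ⟨0, ?_⟩ ⟨G, hG, rfl⟩))
  rintro _ ⟨G, -, rfl⟩
  positivity

lemma exists_lt_of_hajNorm_lt {f : Lp ℝ 2 m} (hf : f ∈ hajSet m φ R) {r : ℝ}
    (hr : hajNorm m φ R f < r) :
    ∃ G ∈ AdmissibleSet m φ R f, √(‖f‖ ^ 2 + ‖G‖ ^ 2) < r := by
  have hr0 : 0 < r := (hajNorm_nonneg f).trans_lt hr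
  rw [hajNorm, Real.sqrt_lt' hr0, ← lt_sub_iff_add_lt'] at hr
  obtain ⟨_, ⟨G, hG, rfl⟩, h⟩ := exists_lt_of_csInf_lt (hf.image _) hr
  exact ⟨G, hG, (Real.sqrt_lt' hr0).2 (lt_sub_iff_add_lt'.1 h)⟩

lemma hajSet_add {f g : Lp ℝ 2 m} (hf : f ∈ hajSet m φ R) (hg : g ∈ hajSet m φ R) :
    f + g ∈ hajSet m φ R := by
  obtain ⟨F, hF⟩ := hf
  obtain ⟨G, hG⟩ := hg
  exact ⟨_, AdmissibleSet.add hF hG⟩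

lemma hajSet_smul (c : ℝ) {f : Lp ℝ 2 m} (hf : f ∈ hajSet m φ R) : c • f ∈ hajSet m φ R := by
  obtain ⟨F, hF⟩ := hf
  exact ⟨_, AdmissibleSet.smul c hF⟩

lemma hajSet_sub {f g : Lp ℝ 2 m} (hf : f ∈ hajSet m φ R) (hg : g ∈ hajSet m φ R) :
    f - g ∈ hajSet m φ R := by
  have := hajSet_add hf (hajSet_smul (-1) hg)
  rwa [neg_one_smul, ← sub_eq_add_neg] at this

lemma hajNorm_zero : hajNorm m φ R 0 = 0 :=
  le_antisymm (by simpa using hajNorm_le (AdmissibleSet.zero (m := m) (φ := φ) (R := R)))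
    (hajNorm_nonneg _)

lemma hajNorm_smul_le (c : ℝ) {f : Lp ℝ 2 m} (hf : f ∈ hajSet m φ R) :
    hajNorm m φ R (c • f) ≤ |c| * hajNorm m φ R f := by
  rcases eq_or_ne c 0 with rfl | hc
  · simp [hajNorm_zero]
  have hc' : 0 < |c| := abs_pos.2 hc
  rw [← div_le_iff₀' hc']
  refine le_of_forall_gt fun r hr => ?_
  obtain ⟨G, hG, h⟩ := exists_lt_of_hajNorm_lt hf hr
  refine lt_of_le_of_lt ?_ h
  rw [div_le_iff₀' hc']
  refine (hajNorm_le (AdmissibleSet.smul c hG)).trans_eq ?_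
  rw [norm_smul, norm_smul, Real.norm_eq_abs, Real.norm_eq_abs, abs_abs, mul_pow, mul_pow,
    ← mul_add, Real.sqrt_mul (sq_nonneg _), Real.sqrt_sq hc'.le]

lemma hajNorm_smul (c : ℝ) {f : Lp ℝ 2 m} (hf : f ∈ hajSet m φ R) :
    hajNorm m φ R (c • f) = |c| * hajNorm m φ R f := by
  refine le_antisymm (hajNorm_smul_le c hf) ?_
  rcases eq_or_ne c 0 with rfl | hc
  · simp [hajNorm_zero]
  have h := hajNorm_smul_le c⁻¹ (hajSet_smul c hf)
  rw [inv_smul_smul₀ hc, abs_inv] at h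
  exact (le_inv_mul_iff₀ (abs_pos.2 hc)).1 h

/-- Minkowski's inequality in the Euclidean plane. -/
lemma sqrt_add_sq_le (a b c d : ℝ) :
    √((a + b) ^ 2 + (c + d) ^ 2) ≤ √(a ^ 2 + c ^ 2) + √(b ^ 2 + d ^ 2) := by
  simpa [EuclideanSpace.norm_eq, Fin.sum_univ_two] using norm_add_le !₂[a, c] !₂[b, d]

lemma hajNorm_add_le {f g : Lp ℝ 2 m} (hf : f ∈ hajSet m φ R) (hg : g ∈ hajSet m φ R) :
    hajNorm m φ R (f + g) ≤ hajNorm m φ R f + hajNorm m φ R g := by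
  refine le_of_forall_pos_le_add fun ε hε => ?_
  obtain ⟨F, hF, hF'⟩ := exists_lt_of_hajNorm_lt hf (lt_add_of_pos_right _ (half_pos hε))
  obtain ⟨G, hG, hG'⟩ := exists_lt_of_hajNorm_lt hg (lt_add_of_pos_right _ (half_pos hε))
  have h1 : √(‖f + g‖ ^ 2 + ‖F + G‖ ^ 2) ≤ √((‖f‖ + ‖g‖) ^ 2 + (‖F‖ + ‖G‖) ^ 2) := by
    gcongr <;> exact norm_add_le _ _
  linarith [hajNorm_le (AdmissibleSet.add hF hG), sqrt_add_sq_le ‖f‖ ‖g‖ ‖F‖ ‖G‖]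

/-- A sequence in `H_{φ,R}` that converges in `L²` and whose consecutive differences are below `2⁻ᵏ` in
the `H_{φ,R}`-norm converges to the same limit in `H_{φ,R}`. -/
lemma tendsto_hajNorm_of_geometric {v : ℕ → Lp ℝ 2 m} {f : Lp ℝ 2 m}
    (hv : ∀ k, v k ∈ hajSet m φ R) (hvf : Tendsto v atTop (nhds f))
    (hd : ∀ k, hajNorm m φ R (v (k + 1) - v k) < (1 / 2 : ℝ) ^ k) :
    f ∈ hajSet m φ R ∧ Tendsto (fun k => hajNorm m φ R (v k - f)) atTop (nhds 0) := by
  choose G hG hGd using fun k => exists_lt_of_hajNorm_lt (hajSet_sub (hv (k + 1)) (hv k)) (hd k)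
  have hGn : ∀ k, ‖G k‖ ≤ (1 / 2 : ℝ) ^ k := fun k =>
    (Real.le_sqrt_of_sq_le (le_add_of_nonneg_left (sq_nonneg _))).trans (hGd k).le
  have hGt : ∀ K k, ‖G (K + k)‖ ≤ (1 / 2 : ℝ) ^ K * (1 / 2) ^ k := fun K k =>
    (hGn _).trans_eq (pow_add _ _ _)
  have hgeo : ∀ K, HasSum (fun k => (1 / 2 : ℝ) ^ K * (1 / 2) ^ k) ((1 / 2 : ℝ) ^ K * 2) :=
    fun K => hasSum_geometric_two.mul_left _
  have hpart : ∀ K j, ∑ i ∈ Finset.range j, G (K + i) ∈ AdmissibleSet m φ R (v (K + j) - v K) := by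
    intro K j
    induction j with
    | zero => simpa using AdmissibleSet.zero
    | succ j ih =>
      rw [Finset.sum_range_succ, ← sub_add_sub_cancel' (v (K + j)) (v K)]
      exact AdmissibleSet.add ih (hG (K + j))
  have htail : ∀ K, ∑' i, G (K + i) ∈ AdmissibleSet m φ R (f - v K) := fun K =>
    AdmissibleSet.of_tendsto
      ((hvf.comp (tendsto_add_atTop_nat K)).sub_const (v K) |>.congr fun j => by
        simp [add_comm])
      (Summable.of_norm_bounded (hgeo K).summable (hGt K)).hasSum.tendsto_sum_nat (hpart K)
  have hf : f ∈ hajSet m φ R := by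
    simpa using hajSet_add ⟨_, htail 0⟩ (hv 0)
  refine ⟨hf, ?_⟩
  have hbound : ∀ K, hajNorm m φ R (v K - f) ≤ √(‖v K - f‖ ^ 2 + ((1 / 2 : ℝ) ^ K * 2) ^ 2) := by
    intro K
    have h := AdmissibleSet.smul (-1) (htail K)
    rw [neg_one_smul, neg_sub, abs_neg, abs_one, one_smul] at h
    refine (hajNorm_le h).trans ?_
    have := tsum_of_norm_bounded (hgeo K) (hGt K)
    gcongr
  refine squeeze_zero (fun _ => hajNorm_nonneg _) hbound ?_
  have h1 : Tendsto (fun K => ‖v K - f‖) atTop (nhds 0) :=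
    tendsto_iff_norm_sub_tendsto_zero.1 hvf
  have h2 : Tendsto (fun K : ℕ => (1 / 2 : ℝ) ^ K * 2) atTop (nhds (0 * 2)) :=
    (tendsto_pow_atTop_nhds_zero_of_lt_one (by norm_num) (by norm_num)).mul_const 2
  simpa using ((h1.pow 2).add (h2.pow 2)).sqrt

lemma hajSet_complete {u : ℕ → Lp ℝ 2 m} (hu : ∀ n, u n ∈ hajSet m φ R)
    (hC : ∀ ε : ℝ, 0 < ε → ∃ N : ℕ, ∀ j ≥ N, ∀ k ≥ N, hajNorm m φ R (u j - u k) < ε) :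
    ∃ f ∈ hajSet m φ R, Tendsto (fun n => hajNorm m φ R (u n - f)) atTop (nhds 0) := by
  have hCau : CauchySeq u := by
    refine Metric.cauchySeq_iff.2 fun ε hε => ?_
    obtain ⟨N, hN⟩ := hC ε hε
    refine ⟨N, fun j hj k hk => ?_⟩
    rw [dist_eq_norm]
    exact (norm_le_hajNorm _).trans_lt (hN j hj k hk)
  obtain ⟨f, huf⟩ := cauchySeq_tendsto_of_complete hCau
  choose N hN using fun k : ℕ => hC ((1 / 2 : ℝ) ^ k) (by positivity)
  -- A monotone sequence of indices that dominates `N` and tends to infinity.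
  let n : ℕ → ℕ := fun k => k + ∑ i ∈ Finset.range (k + 1), N i
  have hnN : ∀ k, N k ≤ n k := fun k =>
    (Finset.single_le_sum (f := N) (fun _ _ => Nat.zero_le _)
      (Finset.self_mem_range_succ k)).trans (Nat.le_add_left _ _)
  have hnk : ∀ k, k ≤ n k := fun k => Nat.le_add_right _ _
  have hns : ∀ k, n k ≤ n (k + 1) := fun k => by
    simp only [n, Finset.sum_range_succ _ (k + 1)]; omega
  have hn : Tendsto n atTop atTop := tendsto_atTop_mono hnk tendsto_id
  obtain ⟨hf, hlim⟩ := tendsto_hajNorm_of_geometric (fun k => hu (n k)) (huf.comp hn)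
    fun k => hN k _ ((hnN k).trans (hns k)) _ (hnN k)
  refine ⟨f, hf, Metric.tendsto_atTop.2 fun ε hε => ?_⟩
  obtain ⟨M, hM⟩ := hC (ε / 2) (half_pos hε)
  obtain ⟨k, hk, hkM⟩ :=
    ((hlim.eventually (gt_mem_nhds (half_pos hε))).and (hn.eventually_ge_atTop M)).exists
  refine ⟨M, fun j hj => ?_⟩
  rw [Real.dist_0_eq_abs, abs_of_nonneg (hajNorm_nonneg _), ← sub_add_sub_cancel (u j) (u (n k)) f]
  have h1 := hajNorm_add_le (hajSet_sub (hu j) (hu (n k))) (hajSet_sub (hu (n k)) hf)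
  have h2 := hM j hj (n k) hkM
  linarith

end Helpers

/-- `(H_{φ,R}(X), ‖·‖_{H_{φ,R}})` is a Banach space: `H_{φ,R}(X)` is a linear subspace of
`L²(m)`, the `H_{φ,R}`-norm is a norm on it, and every Cauchy sequence for this norm
converges in this norm to an element of `H_{φ,R}(X)`. -/
theorem hajSet_banach
    [CompleteSpace X] [TopologicalSpace.SeparableSpace X]
    (m : Measure X) (hm : m ≠ 0) (hballs : ∀ (x : X) (r : ℝ), m (Metric.ball x r) < ⊤)
    (φ : X → ℝ) (hφmeas : Measurable φ) (hφ0 : ∀ x, 0 ≤ φ x)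
    (R : ℝ) (hR : 0 < R) :
    (0 ∈ hajSet m φ R) ∧
    (∀ f ∈ hajSet m φ R, ∀ g ∈ hajSet m φ R, f + g ∈ hajSet m φ R) ∧
    (∀ (c : ℝ), ∀ f ∈ hajSet m φ R, c • f ∈ hajSet m φ R) ∧
    (∀ f ∈ hajSet m φ R, (hajNorm m φ R f = 0 ↔ f = 0)) ∧
    (∀ (c : ℝ), ∀ f ∈ hajSet m φ R, hajNorm m φ R (c • f) = |c| * hajNorm m φ R f) ∧
    (∀ f ∈ hajSet m φ R, ∀ g ∈ hajSet m φ R,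
      hajNorm m φ R (f + g) ≤ hajNorm m φ R f + hajNorm m φ R g) ∧
    (∀ u : ℕ → Lp ℝ 2 m, (∀ n, u n ∈ hajSet m φ R) →
      (∀ ε : ℝ, 0 < ε → ∃ N : ℕ, ∀ j ≥ N, ∀ k ≥ N, hajNorm m φ R (u j - u k) < ε) →
      ∃ f ∈ hajSet m φ R, Tendsto (fun n => hajNorm m φ R (u n - f)) atTop (nhds 0)) := by
  refine ⟨⟨0, AdmissibleSet.zero⟩, fun f hf g hg => hajSet_add hf hg,
    fun c f hf => hajSet_smul c hf, fun f _ => ⟨fun h => ?_, ?_⟩,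
    fun c f hf => hajNorm_smul c hf, fun f hf g hg => hajNorm_add_le hf hg,
    fun u hu hC => hajSet_complete hu hC⟩
  · exact norm_le_zero_iff.1 ((norm_le_hajNorm f).trans_eq h)
  · rintro rfl
    exact hajNorm_zero
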